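/- arXiv:2306.03605 — 2 statements merged into one kernel-verified Lean document; each statement's English description precedes it below -/
import Mathlib

section
/- Let G be a finite simple graph, T ⊆ V(G), and 𝒯 a partition of T, and let ν = ν(G,𝒯) be the Mader path-packing number of (G,𝒯). Then there exists a set X ⊆ V(G) (possibly intersecting T) with |X| ≤ 2ν such that every 𝒯-path in G contains a vertex of X; equivalently, X is a vertex multiway cut for 𝒯: no connected component of G − X contains terminals from two distinct blocks of 𝒯. -/
/-- A Mader path (`𝒯`-path) in `G` with respect to the terminal set `T` and the
partition of `T` induced by the block-labelling `σ`: a path whose endpoints are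
terminals lying in distinct blocks, and whose internal vertices avoid `T`. -/
def IsMaderPath {V : Type*} (G : SimpleGraph V) (T : Finset V) (σ : V → ℕ)
    {u v : V} (p : G.Walk u v) : Prop :=
  p.IsPath ∧ u ∈ T ∧ v ∈ T ∧ σ u ≠ σ v ∧
    ∀ x ∈ p.support, x ∈ T → x = u ∨ x = v

/-- `S` is Mader matchable in `(G, 𝒯)`: there is a collection of pairwise
vertex-disjoint Mader paths whose set of endpoints is exactly `S`. -/
def MaderMatchable {V : Type*} (G : SimpleGraph V) (T : Finset V) (σ : V → ℕ)
    (S : Finset V) : Prop :=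
  ∃ (n : ℕ) (a b : Fin n → V) (p : ∀ i, G.Walk (a i) (b i)),
    (∀ i, IsMaderPath G T σ (p i)) ∧
    (∀ i j, i ≠ j → ∀ x, x ∈ (p i).support → x ∉ (p j).support) ∧
    (∀ x, x ∈ S ↔ ∃ i, x = a i ∨ x = b i)

/-- `(G, 𝒯)` has a Mader path packing consisting of `n` paths. -/
def HasMaderPacking {V : Type*} (G : SimpleGraph V) (T : Finset V) (σ : V → ℕ)
    (n : ℕ) : Prop :=
  ∃ (a b : Fin n → V) (p : ∀ i, G.Walk (a i) (b i)),
    (∀ i, IsMaderPath G T σ (p i)) ∧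
    (∀ i j, i ≠ j → ∀ x, x ∈ (p i).support → x ∉ (p j).support)

/-- `ν` is the Mader path-packing number of `(G, 𝒯)`. -/
def MaderNu {V : Type*} (G : SimpleGraph V) (T : Finset V) (σ : V → ℕ) (ν : ℕ) : Prop :=
  HasMaderPacking G T σ ν ∧ ∀ m, HasMaderPacking G T σ m → m ≤ ν

open SimpleGraph

namespace MaderAux

/-- A walk bundled with its endpoints. -/
structure PW {V : Type*} (G : SimpleGraph V) where
  a : V
  b : V
  w : G.Walk a b

/-- Pairwise vertex-disjointness of a family. -/
def Disj {V : Type*} {G : SimpleGraph V} {n : ℕ} (Q : Fin n → PW G) : Prop :=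
  ∀ i j, i ≠ j → ∀ x, x ∈ (Q i).w.support → x ∉ (Q j).w.support

def Pack {V : Type*} (G : SimpleGraph V) (T : Finset V) (σ : V → ℕ) {n : ℕ}
    (Q : Fin n → PW G) : Prop :=
  (∀ i, IsMaderPath G T σ (Q i).w) ∧ Disj Q

theorem has_iff {V : Type*} {G : SimpleGraph V} {T : Finset V} {σ : V → ℕ} {n : ℕ} :
    HasMaderPacking G T σ n ↔ ∃ Q : Fin n → PW G, Pack G T σ Q := by
  constructor
  · rintro ⟨a, b, p, h1, h2⟩
    exact ⟨fun i => ⟨a i, b i, p i⟩, h1, h2⟩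
  · rintro ⟨Q, h1, h2⟩
    exact ⟨fun i => (Q i).a, fun i => (Q i).b, fun i => (Q i).w, h1, h2⟩

def NoHit {V : Type*} (G : SimpleGraph V) (T : Finset V) (σ : V → ℕ) (k : ℕ) : Prop :=
  ∀ X : Finset V, X.card ≤ 2 * k →
    ∃ (u v : V) (p : G.Walk u v), IsMaderPath G T σ p ∧ ∀ x ∈ X, x ∉ p.support

variable {V : Type*} {G : SimpleGraph V} {T : Finset V} {σ : V → ℕ}

theorem path_append {u v w : V} (p : G.Walk u v) (q : G.Walk v w) (hp : p.IsPath)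
    (hq : q.IsPath) (h : ∀ x ∈ p.support, x ∈ q.support → x = v) : (p.append q).IsPath := by
  induction p with
  | nil => simpa using hq
  | cons hadj p ih =>
    rw [Walk.cons_append, Walk.cons_isPath_iff]
    rw [Walk.cons_isPath_iff] at hp
    refine ⟨ih q hp.1 hq (fun x hx hx' => h x (by simp [hx]) hx'), ?_⟩
    rw [Walk.mem_support_append_iff]
    rintro (h' | h')
    · exact hp.2 h'
    · have := h _ (by simp) h'
      subst this
      exact hp.2 (by simp)

theorem mader_reverse {u v : V} {p : G.Walk u v} (h : IsMaderPath G T σ p) :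
    IsMaderPath G T σ p.reverse := by
  obtain ⟨h1, h2, h3, h4, h5⟩ := h
  exact ⟨h1.reverse, h3, h2, h4.symm, fun x hx hT => (h5 x (by simpa using hx) hT).symm⟩

theorem mader_orient {a b r : V} {p : G.Walk a b} (h : IsMaderPath G T σ p) (hr : r ∈ T)
    (hrp : r ∈ p.support) :
    ∃ (z : V) (p' : G.Walk r z), IsMaderPath G T σ p' ∧ (∀ x, x ∈ p'.support ↔ x ∈ p.support) ∧
      (∀ x, x ∈ p'.edges ↔ x ∈ p.edges) := by
  rcases h.2.2.2.2 r hrp hr with rfl | rfl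
  · exact ⟨b, p, h, by simp, by simp⟩
  · exact ⟨a, p.reverse, mader_reverse h, by simp, by simp⟩

theorem mader_transfer {H : SimpleGraph V} {u v : V} {p : G.Walk u v}
    (h : IsMaderPath G T σ p) (hH : ∀ e ∈ p.edges, e ∈ H.edgeSet) :
    IsMaderPath H T σ (p.transfer H hH) := by
  obtain ⟨h1, h2, h3, h4, h5⟩ := h
  exact ⟨h1.transfer hH, h2, h3, h4, by simpa using h5⟩

theorem mader_ne {u v : V} {p : G.Walk u v} (h : IsMaderPath G T σ p) : u ≠ v := by
  rintro rfl
  exact h.2.2.2.1 rfl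

theorem pack_update [DecidableEq V] {n : ℕ} {Q : Fin n → PW G} (j : Fin n) (p : PW G)
    (hQ : ∀ i, i ≠ j → IsMaderPath G T σ (Q i).w) (hd : Disj Q)
    (hp : IsMaderPath G T σ p.w)
    (hdp : ∀ i, i ≠ j → ∀ x ∈ p.w.support, x ∉ (Q i).w.support) :
    Pack G T σ (Function.update Q j p) := by
  constructor
  · intro i
    by_cases h : i = j
    · subst h; rw [Function.update_self]; exact hp
    · rw [Function.update_of_ne h]; exact hQ i h
  · intro i i' hne x hx hx'
    by_cases h : i = j
    · subst h
      rw [Function.update_self] at hx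
      rw [Function.update_of_ne hne.symm] at hx'
      exact hdp i' hne.symm x hx hx'
    · rw [Function.update_of_ne h] at hx
      by_cases h' : i' = j
      · subst h'
        rw [Function.update_self] at hx'
        exact hdp i h x hx' hx
      · rw [Function.update_of_ne h'] at hx'
        exact hd i i' hne x hx hx'

section
open Classical

/-- Number of edges outside `E`. -/
noncomputable def wcost (E : Set (Sym2 V)) {a b : V} (p : G.Walk a b) : ℕ :=
  p.edges.countP (fun e => decide (e ∉ E))

noncomputable def cost (E : Set (Sym2 V)) {n : ℕ} (Q : Fin n → PW G) : ℕ :=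
  ∑ i, wcost E (Q i).w

theorem wcost_append (E : Set (Sym2 V)) {a b c : V} (p : G.Walk a b) (q : G.Walk b c) :
    wcost E (p.append q) = wcost E p + wcost E q := by
  simp [wcost, Walk.edges_append, List.countP_append]

theorem wcost_reverse (E : Set (Sym2 V)) {a b : V} (p : G.Walk a b) :
    wcost E p.reverse = wcost E p := by
  simp [wcost, Walk.edges_reverse, List.countP_reverse]

theorem wcost_eq_zero (E : Set (Sym2 V)) {a b : V} (p : G.Walk a b) :
    wcost E p = 0 ↔ ∀ e ∈ p.edges, e ∈ E := by
  simp [wcost, List.countP_eq_zero]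

theorem cost_update (E : Set (Sym2 V)) {n : ℕ} (Q : Fin n → PW G) (j : Fin n) (p : PW G) :
    cost E (Function.update Q j p) + wcost E (Q j).w = cost E Q + wcost E p.w := by
  unfold cost
  rw [← Finset.add_sum_erase _ _ (Finset.mem_univ j),
    ← Finset.add_sum_erase _ (fun i => wcost E (Q i).w) (Finset.mem_univ j)]
  have : ∑ x ∈ Finset.univ.erase j, wcost E (Function.update Q j p x).w
      = ∑ x ∈ Finset.univ.erase j, wcost E (Q x).w := by
    apply Finset.sum_congr rfl
    intro x hx
    rw [Function.update_of_ne (Finset.ne_of_mem_erase hx)]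
  rw [this, Function.update_self]
  ring

end

theorem mader_off [DecidableEq V] {u : V} {c : ℕ} {a b : V} {p : G.Walk a b}
    (h : IsMaderPath G (insert u T) (Function.update σ u c) p) (hup : u ∉ p.support) :
    IsMaderPath G T σ p := by
  obtain ⟨h1, h2, h3, h4, h5⟩ := h
  have hau : a ≠ u := by rintro rfl; exact hup (by simp)
  have hbu : b ≠ u := by rintro rfl; exact hup (by simp)
  rw [Function.update_of_ne hau, Function.update_of_ne hbu] at h4
  exact ⟨h1, by simpa [hau] using h2, by simpa [hbu] using h3, h4,
    fun x hx hT => h5 x hx (by simp [hT])⟩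

theorem mader_on [DecidableEq V] {u : V} {c : ℕ} {a b : V} {p : G.Walk a b}
    (h : IsMaderPath G T σ p) (hup : u ∉ p.support) :
    IsMaderPath G (insert u T) (Function.update σ u c) p := by
  obtain ⟨h1, h2, h3, h4, h5⟩ := h
  have hau : a ≠ u := by rintro rfl; exact hup (by simp)
  have hbu : b ≠ u := by rintro rfl; exact hup (by simp)
  refine ⟨h1, by simp [h2], by simp [h3], ?_, ?_⟩
  · rwa [Function.update_of_ne hau, Function.update_of_ne hbu]
  · intro x hx hT
    rcases Finset.mem_insert.1 hT with rfl | hT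
    · exact absurd hx hup
    · exact h5 x hx hT

/-- Walks using only edges of a disjoint family stay in one member. -/
theorem follow {n : ℕ} {P : Fin n → PW G} (hd : Disj P) (i : Fin n) {w e : V} (q : G.Walk w e)
    (hw : w ∈ (P i).w.support) (hq : ∀ d ∈ q.edges, ∃ j, d ∈ (P j).w.edges) :
    (∀ x ∈ q.support, x ∈ (P i).w.support) ∧ ∀ d ∈ q.edges, d ∈ (P i).w.edges := by
  induction q with
  | nil => simpa using hw
  | cons hadj q ih =>
    rename_i w v e
    obtain ⟨j, hj⟩ := hq s(w, v) (by simp)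
    have hji : j = i := by
      by_contra hne
      exact hd j i hne w ((P j).w.fst_mem_support_of_mem_edges hj) hw
    subst hji
    have := ih ((P j).w.snd_mem_support_of_mem_edges hj)
      (fun d hd' => hq d (by simp [hd']))
    refine ⟨?_, ?_⟩
    · intro x hx
      rcases (by simpa using hx : x = w ∨ x ∈ q.support) with rfl | hx
      · exact hw
      · exact this.1 x hx
    · intro d hd'
      rcases (by simpa using hd' : d = s(w, v) ∨ d ∈ q.edges) with rfl | hd'
      · exact hj
      · exact this.2 d hd'

/-- Two paths with the same ends, edges of one inside the other. -/
theorem path_cover {w b : V} (p q : G.Walk w b) (hp : p.IsPath) (hq : q.IsPath)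
    (h : ∀ d ∈ q.edges, d ∈ p.edges) : ∀ x ∈ p.support, x ∈ q.support := by
  induction p with
  | nil => simp
  | cons hadj p ih =>
    rename_i w v b
    rw [Walk.cons_isPath_iff] at hp
    cases q with
    | nil => exact absurd p.end_mem_support hp.2
    | cons hadj' q =>
      rename_i v'
      rw [Walk.cons_isPath_iff] at hq
      have h1 := h s(w, v') (by simp)
      have hv : v' = v := by
        rw [Walk.edges_cons, List.mem_cons] at h1
        rcases h1 with h2 | h2
        · exact Sym2.congr_right.1 h2
        · exact absurd (p.fst_mem_support_of_mem_edges h2) hp.2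
      subst hv
      intro x hx
      rcases (by simpa using hx : x = w ∨ x ∈ p.support) with rfl | hx
      · simp
      · have := ih q hp.1 hq.1 (fun d hd => by
          have h3 := h d (by simp [hd])
          rw [Walk.edges_cons, List.mem_cons] at h3
          rcases h3 with rfl | h2
          · exact absurd (q.fst_mem_support_of_mem_edges hd) hq.2
          · exact h2) x hx
        simp [this]

theorem cover_u [DecidableEq V] {u : V} {c K : ℕ} (hno : ¬ HasMaderPacking G T σ K)
    {Q : Fin K → PW G} (hQ : Pack G (insert u T) (Function.update σ u c) Q) :
    ∃ i, u ∈ (Q i).w.support := by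
  by_contra hcon
  push Not at hcon
  exact hno (has_iff.2 ⟨Q, fun i => mader_off (hQ.1 i) (hcon i), hQ.2⟩)

theorem reroute [DecidableEq V] {u : V} {c K : ℕ} (hu : u ∉ T)
    (hno : ¬ HasMaderPacking G T σ K)
    {Q : Fin K → PW G} (hQ : Pack G (insert u T) (Function.update σ u c) Q)
    (E : Set (Sym2 V))
    (hmin : ∀ Q' : Fin K → PW G, Pack G (insert u T) (Function.update σ u c) Q' →
      cost E Q ≤ cost E Q')
    {r z : V} (P : G.Walk r z) (hP : P.IsPath) (hPE : ∀ d ∈ P.edges, d ∈ E)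
    (hPT : ∀ x ∈ P.support, x ∈ T → x = r ∨ x = z) (hr : r ∈ T)
    (hrQ : ∀ i, r ∉ (Q i).w.support)
    {w : V} (hw : w ∈ P.support) {j : Fin K}
    (hfirst : ∀ x ∈ (P.takeUntil w hw).support, ∀ i, x ∈ (Q i).w.support → x = w)
    {e' e : V} (q : G.Walk e' e)
    (hq : IsMaderPath G (insert u T) (Function.update σ u c) q)
    (hqs : ∀ x, x ∈ q.support ↔ x ∈ (Q j).w.support)
    (hqc : wcost E q = wcost E (Q j).w)
    (hwq : w ∈ q.support)
    (hσ : Function.update σ u c e' ≠ Function.update σ u c r) :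
    e ≠ u ∧ (∀ d ∈ (q.dropUntil w hwq).edges, d ∈ E) ∧
      (w = e ∨ ∃ Q' : Fin K → PW G, Pack G (insert u T) (Function.update σ u c) Q' ∧
        ∀ i, e ∉ (Q' i).w.support) := by
  obtain ⟨i0, hi0⟩ := cover_u hno hQ
  have hru : r ≠ u := by rintro rfl; exact hu hr
  -- the rerouted path
  set p' : G.Walk e' r := (q.takeUntil w hwq).append (P.takeUntil w hw).reverse with hp'
  have hsub1 : ∀ x ∈ (q.takeUntil w hwq).support, x ∈ q.support :=
    fun x hx => q.support_takeUntil_subset_support hwq hx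
  have hsub2 : ∀ x ∈ (P.takeUntil w hw).support, x ∈ P.support :=
    fun x hx => P.support_takeUntil_subset_support hw hx
  have hpath : p'.IsPath := by
    apply path_append _ _ (hq.1.takeUntil hwq) (hP.takeUntil hw).reverse
    intro x hx hx'
    exact hfirst x (by simpa using hx') j ((hqs x).1 (hsub1 x hx))
  have hsupp : ∀ x ∈ p'.support, x ∈ (q.takeUntil w hwq).support ∨ x ∈ (P.takeUntil w hw).support := by
    intro x hx
    rw [hp', Walk.mem_support_append_iff] at hx
    simpa using hx
  have hdisj : ∀ i, i ≠ j → ∀ x ∈ p'.support, x ∉ (Q i).w.support := by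
    intro i hij x hx hxi
    have hxj : x ∈ (Q j).w.support := by
      rcases hsupp x hx with h | h
      · exact (hqs x).1 (hsub1 x h)
      · rw [hfirst x h i hxi]; exact (hqs w).1 hwq
    exact hQ.2 i j hij x hxi hxj
  have hcost : wcost E p' + wcost E (q.dropUntil w hwq) = wcost E q := by
    conv_rhs => rw [← q.take_spec hwq]
    rw [hp', wcost_append, wcost_append, wcost_reverse]
    have : wcost E (P.takeUntil w hw) = 0 :=
      (wcost_eq_zero _ _).2 fun d hd => hPE d (P.edges_takeUntil_subset_edges hw hd)
    omega
  have hwr : w ≠ r := by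
    rintro rfl
    exact hrQ j ((hqs _).1 hwq)
  have he'e : e' ≠ e := mader_ne hq
  -- terminals in `T` on `p'`
  have hT : ∀ x ∈ p'.support, x ∈ T → x = e' ∨ x = r ∨ (x = e ∧ w = e) := by
    intro x hx hxT
    have hq' : x ∈ (q.takeUntil w hwq).support → x = e' ∨ x = r ∨ (x = e ∧ w = e) := by
      intro h
      rcases hq.2.2.2.2 x (hsub1 x h) (by simp [hxT]) with h1 | h1
      · exact Or.inl h1
      · subst h1
        by_cases hwx : w = x
        · exact Or.inr (Or.inr ⟨rfl, hwx⟩)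
        · exact absurd h (Walk.endpoint_notMem_support_takeUntil hq.1 hwq (Ne.symm hwx))
    rcases hsupp x hx with h | h
    · exact hq' h
    · rcases hPT x (hsub2 x h) hxT with h1 | h1
      · exact Or.inr (Or.inl h1)
      · subst h1
        by_cases hwx : w = x
        · subst hwx
          exact hq' (by simp)
        · exact absurd h (Walk.endpoint_notMem_support_takeUntil hP hw (Ne.symm hwx))
  have hup : u ∈ p'.support → u ∈ q.support := by
    intro h
    rcases hsupp u h with h | h
    · exact hsub1 u h
    · rw [hfirst u h i0 hi0]; exact hwq
  -- discard u impossible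
  have heu : e ≠ u := by
    intro heu
    apply hno
    rw [has_iff]
    refine ⟨Function.update Q j ⟨e', r, p'⟩, pack_update j _ ?_ hQ.2 ?_ hdisj⟩
    · intro i hij
      apply mader_off (hQ.1 i)
      intro hui
      refine hQ.2 i j hij u hui ((hqs u).1 ?_)
      rw [← heu]; simp
    · have he'u : e' ≠ u := by rw [← heu]; exact he'e
      refine ⟨hpath, by simpa [he'u] using hq.2.1, hr, ?_, ?_⟩
      · rwa [Function.update_of_ne he'u, Function.update_of_ne hru] at hσ
      · intro x hx hxT
        rcases hT x hx hxT with h | h | h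
        · exact Or.inl h
        · exact Or.inr h
        · exact absurd (heu ▸ h.1 ▸ hxT) hu
  refine ⟨heu, ?_⟩
  by_cases hwe : w = e
  · refine ⟨?_, Or.inl hwe⟩
    subst hwe
    have : (q.dropUntil w hwq).IsPath := hq.1.dropUntil hwq
    have h2 := (Walk.isPath_iff_nil.1 this).eq_nil
    intro d hd
    rw [h2] at hd
    simp at hd
  have hpk : Pack G (insert u T) (Function.update σ u c) (Function.update Q j ⟨e', r, p'⟩) := by
    refine pack_update j _ (fun i _ => hQ.1 i) hQ.2 ?_ hdisj
    refine ⟨hpath, hq.2.1, by simp [hr], hσ, ?_⟩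
    intro x hx hxT
    rcases Finset.mem_insert.1 hxT with h | h
    · subst h
      rcases hq.2.2.2.2 x (hup hx) hxT with h1 | h1
      · exact Or.inl h1
      · exact absurd h1.symm heu
    · rcases hT x hx h with h | h | h
      · exact Or.inl h
      · exact Or.inr h
      · exact absurd h.2 hwe
  constructor
  · have h1 := hmin _ hpk
    have h2 := cost_update E Q j ⟨e', r, p'⟩
    rw [← wcost_eq_zero]
    simp only at h2
    omega
  · right
    refine ⟨_, hpk, ?_⟩
    intro i hi
    have heq : e ∈ q.support := by simp
    by_cases hij : i = j
    · subst hij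
      rw [Function.update_self] at hi
      rcases hsupp e hi with h | h
      · exact Walk.endpoint_notMem_support_takeUntil hq.1 hwq (Ne.symm hwe) h
      · exact hwe (hfirst e h i ((hqs e).1 heq)).symm
    · rw [Function.update_of_ne hij] at hi
      exact hQ.2 i j hij e hi ((hqs e).1 heq)

/-- Terminals covered by a family. -/
noncomputable def cov [DecidableEq V] (T : Finset V) {n : ℕ} (Q : Fin n → PW G) : Finset V :=
  Finset.univ.biUnion fun i => T.filter (fun x => x ∈ (Q i).w.support)

theorem mem_cov [DecidableEq V] {n : ℕ} {Q : Fin n → PW G} {x : V} :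
    x ∈ cov T Q ↔ x ∈ T ∧ ∃ i, x ∈ (Q i).w.support := by
  simp [cov]

theorem card_cov [DecidableEq V] {n : ℕ} {Q : Fin n → PW G} (hd : Disj Q) :
    (cov T Q).card = ∑ i, (T.filter (fun x => x ∈ (Q i).w.support)).card := by
  apply Finset.card_biUnion
  intro i _ j _ hij
  rw [Function.onFun, Finset.disjoint_left]
  intro x hx hx'
  exact hd i j hij x (Finset.mem_filter.1 hx).2 (Finset.mem_filter.1 hx').2

theorem card_mader [DecidableEq V] {a b : V} {p : G.Walk a b} (h : IsMaderPath G T σ p) :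
    (T.filter (fun x => x ∈ p.support)).card = 2 := by
  have : T.filter (fun x => x ∈ p.support) = {a, b} := by
    ext x
    simp only [Finset.mem_filter, Finset.mem_insert, Finset.mem_singleton]
    constructor
    · rintro ⟨h1, h2⟩
      exact h.2.2.2.2 x h2 h1
    · rintro (rfl | rfl)
      · exact ⟨h.2.1, by simp⟩
      · exact ⟨h.2.2.1, by simp⟩
  rw [this, Finset.card_pair (mader_ne h)]

theorem card_pack [DecidableEq V] {n : ℕ} {Q : Fin n → PW G} (h : Pack G T σ Q) :
    (cov T Q).card = 2 * n := by
  rw [card_cov h.2, Finset.sum_congr rfl (fun i _ => card_mader (h.1 i))]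
  simp [mul_comm]

theorem card_cov_insert [DecidableEq V] {u : V} {c K : ℕ} (hu : u ∉ T)
    (hno : ¬ HasMaderPacking G T σ K)
    {Q : Fin K → PW G} (hQ : Pack G (insert u T) (Function.update σ u c) Q) :
    (cov T Q).card + 1 = 2 * K := by
  rw [← card_pack hQ]
  have : cov (insert u T) Q = insert u (cov T Q) := by
    ext x
    simp only [Finset.mem_insert, mem_cov]
    constructor
    · rintro ⟨h1 | h1, h2⟩
      · exact Or.inl h1
      · exact Or.inr ⟨h1, h2⟩
    · rintro (rfl | h)
      · exact ⟨Or.inl rfl, cover_u hno hQ⟩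
      · exact ⟨Or.inr h.1, h.2⟩
  rw [this, Finset.card_insert_of_notMem]
  simp [mem_cov, hu]

theorem exists_min [DecidableEq V] {K : ℕ} (E : Set (Sym2 V)) (h : HasMaderPacking G T σ K) :
    ∃ Q : Fin K → PW G, Pack G T σ Q ∧ ∀ Q' : Fin K → PW G, Pack G T σ Q' → cost E Q ≤ cost E Q' := by
  obtain ⟨Q, hQ⟩ := has_iff.1 h
  have hne : ({Q | Pack G T σ Q} : Set (Fin K → PW G)).Nonempty := ⟨Q, hQ⟩
  refine ⟨Function.argminOn (cost E) _ hne, Function.argminOn_mem (cost E) _ hne, ?_⟩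
  intro Q' hQ'
  exact Function.argminOn_le (cost E) {Q | Pack G T σ Q} (a := Q') hQ'

/-- First vertex of `P` on the family. -/
theorem first_hit [Fintype V] [DecidableEq V] {n : ℕ} (Q : Fin n → PW G) {r z : V}
    (P : G.Walk r z) (h : ∃ x ∈ P.support, ∃ i, x ∈ (Q i).w.support) :
    ∃ w, ∃ hw : w ∈ P.support, ∃ j, w ∈ (Q j).w.support ∧
      ∀ x ∈ (P.takeUntil w hw).support, ∀ i, x ∈ (Q i).w.support → x = w := by
  obtain ⟨x, hx, i, hi⟩ := h
  obtain ⟨w, hw1, hw2, hw3⟩ := P.exists_mem_support_forall_mem_support_imp_eq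
    (cov Finset.univ Q) ⟨x, by
      rw [Finset.mem_filter, mem_cov]
      exact ⟨⟨by simp, i, hi⟩, hx⟩⟩
  rw [mem_cov] at hw1
  obtain ⟨-, j, hj⟩ := hw1
  exact ⟨w, hw2, j, hj, fun x hx i hi => hw3 x (mem_cov.2 ⟨by simp, i, hi⟩) hx⟩

/-- The edges of a family. -/
def edgs {n : ℕ} (P : Fin n → PW G) : Set (Sym2 V) := {d | ∃ i, d ∈ (P i).w.edges}

/-- `K - 1` Mader paths and a path from `T` to `x`, all disjoint and avoiding `t`. -/
def Miss (G : SimpleGraph V) (T : Finset V) (σ : V → ℕ) (K : ℕ) (x t : V) : Prop :=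
  ∃ (P : Fin K → PW G) (i0 : Fin K), (∀ i, i ≠ i0 → IsMaderPath G T σ (P i).w) ∧ Disj P ∧
    (P i0).w.IsPath ∧ (P i0).a ∈ T ∧ (P i0).b = x ∧
    (∀ y ∈ (P i0).w.support, y ∈ T → y = (P i0).a) ∧ ∀ i, t ∉ (P i).w.support

theorem miss_of_pack [DecidableEq V] {u t : V} {c K : ℕ} (hu : u ∉ T)
    (hno : ¬ HasMaderPacking G T σ K)
    {Q : Fin K → PW G} (hQ : Pack G (insert u T) (Function.update σ u c) Q)
    (ht : ∀ i, t ∉ (Q i).w.support) : Miss G T σ K u t := by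
  obtain ⟨j, hj⟩ := cover_u hno hQ
  obtain ⟨v, q, hq, hqs, -⟩ := mader_orient (hQ.1 j) (Finset.mem_insert_self u T) hj
  have hpk := pack_update j ⟨v, u, q.reverse⟩ (fun i _ => hQ.1 i) hQ.2 (mader_reverse hq) (by
    intro i hij x hx hxi
    exact hQ.2 i j hij x hxi ((hqs x).1 (by simpa using hx)))
  have hvu : v ≠ u := (mader_ne hq).symm
  refine ⟨Function.update Q j ⟨v, u, q.reverse⟩, j, ?_, hpk.2, ?_, ?_, ?_, ?_, ?_⟩
  · intro i hij
    rw [Function.update_of_ne hij]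
    exact mader_off (hQ.1 i) fun h => hQ.2 i j hij u h hj
  · rw [Function.update_self]; exact hq.1.reverse
  · rw [Function.update_self]; simpa [hvu] using hq.2.2.1
  · rw [Function.update_self]
  · rw [Function.update_self]
    intro y hy hyT
    rcases hq.2.2.2.2 y (by simpa using hy) (by simp [hyT]) with h | h
    · exact absurd (h ▸ hyT) hu
    · exact h
  · intro i
    by_cases hij : i = j
    · subst hij
      rw [Function.update_self]
      intro h
      exact ht i ((hqs t).1 (by simpa using h))
    · rw [Function.update_of_ne hij]
      exact ht i

theorem gallai_step [Fintype V] [DecidableEq V] {u x t : V} {c K : ℕ} (hu : u ∉ T) (ht : t ∈ T)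
    (hc : ∀ v, σ v ≠ c)
    (hinj : ∀ a ∈ T, ∀ b ∈ T, σ a = σ b → a = b)
    (hno : ¬ HasMaderPacking G T σ K)
    (hhas : HasMaderPacking G (insert u T) (Function.update σ u c) K)
    (hadj : G.Adj x u) (hM : Miss G T σ K x t) : Miss G T σ K u t := by
  obtain ⟨P, i0, hPm, hPd, hP0, hP0T, hP0x, hP0s, hPt⟩ := hM
  obtain ⟨Q, hQ, hmin⟩ := exists_min (edgs P) hhas
  by_contra hcon
  have hcon' : ∀ Q' : Fin K → PW G, Pack G (insert u T) (Function.update σ u c) Q' →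
      ∃ i, t ∈ (Q' i).w.support := by
    intro Q' hQ'
    by_contra h
    push Not at h
    exact hcon (miss_of_pack hu hno hQ' h)
  -- choose r
  have hcardQ := card_cov_insert hu hno hQ
  have hcardP : 2 * K ≤ (cov T P).card + 1 := by
    rw [card_cov hPd, ← Finset.add_sum_erase _ _ (Finset.mem_univ i0),
      Finset.sum_congr rfl (fun i hi => card_mader (hPm i (Finset.ne_of_mem_erase hi)))]
    have h1 : 1 ≤ (T.filter (fun x => x ∈ (P i0).w.support)).card :=
      Finset.card_pos.2 ⟨(P i0).a, by simp [hP0T]⟩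
    have h2 : (Finset.univ.erase i0).card = K - 1 := by
      rw [Finset.card_erase_of_mem (Finset.mem_univ _)]; simp
    rw [Finset.sum_const, h2, smul_eq_mul]
    have := i0.pos
    omega
  have htQ : t ∈ cov T Q := mem_cov.2 ⟨ht, hcon' Q hQ⟩
  obtain ⟨r, hrP, hrQ⟩ : ∃ r ∈ cov T P, r ∉ (cov T Q).erase t := by
    apply Finset.exists_mem_notMem_of_card_lt_card
    have := Finset.card_erase_add_one htQ
    omega
  obtain ⟨hrT, i, hri⟩ := mem_cov.1 hrP
  have hrt : r ≠ t := by rintro rfl; exact hPt i hri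
  have hrQ' : ∀ j, r ∉ (Q j).w.support := by
    intro j hj
    exact hrQ (Finset.mem_erase.2 ⟨hrt, mem_cov.2 ⟨hrT, j, hj⟩⟩)
  -- the path from r
  obtain ⟨z, p, hp, hps, hpe, hpT, hpc⟩ : ∃ (z : V) (p : G.Walk r z), p.IsPath ∧
      (∀ y, y ∈ p.support ↔ y ∈ (P i).w.support) ∧ (∀ y, y ∈ p.edges ↔ y ∈ (P i).w.edges) ∧
      (∀ y ∈ p.support, y ∈ T → y = r ∨ y = z) ∧
      (IsMaderPath G T σ p ∨ (z = x ∧ ∀ y ∈ p.support, y ∈ T → y = r)) := by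
    by_cases hi : i = i0
    · subst hi
      have := hP0s r hri hrT
      subst this
      exact ⟨_, (P i).w, hP0, by simp, by simp, fun y hy hT => Or.inl (hP0s y hy hT),
        Or.inr ⟨hP0x, hP0s⟩⟩
    · obtain ⟨z, p, h1, h2, h3⟩ := mader_orient (hPm i hi) hrT hri
      exact ⟨z, p, h1.1, h2, h3, h1.2.2.2.2, Or.inl h1⟩
  by_cases hhit : ∃ y ∈ p.support, ∃ j, y ∈ (Q j).w.support
  · obtain ⟨w, hw, j, hwj, hfirst⟩ := first_hit Q p hhit
    have key : ∀ (e' e : V) (q : G.Walk e' e),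
        IsMaderPath G (insert u T) (Function.update σ u c) q →
        (∀ y, y ∈ q.support ↔ y ∈ (Q j).w.support) →
        wcost (edgs P) q = wcost (edgs P) (Q j).w → e = z := by
      intro e' e q hq hqs hqc
      have hwq : w ∈ q.support := (hqs w).2 hwj
      have hne : Function.update σ u c e' ≠ Function.update σ u c r := by
        have hru : r ≠ u := by rintro rfl; exact hu hrT
        rw [Function.update_of_ne hru]
        by_cases he : e' = u
        · subst he; simpa using (hc r).symm
        · rw [Function.update_of_ne he]
          intro h
          have := hinj e' (by simpa [he] using hq.2.1) r hrT h
          subst this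
          exact hrQ' j ((hqs e').1 (by simp))
      obtain ⟨h1, h2, h3⟩ := reroute hu hno hQ (edgs P) hmin p hp
        (fun d hd => ⟨i, (hpe d).1 hd⟩) hpT hrT hrQ' hw hfirst q hq hqs hqc hwq hne
      have heT : e ∈ T := by simpa [h1] using hq.2.2.1
      have hfol := follow hPd i (q.dropUntil w hwq) ((hps w).1 hw) h2
      have hep : e ∈ p.support := (hps e).2 (hfol.1 e (by simp))
      rcases hpT e hep heT with h | h
      · subst h
        exact absurd ((hqs e).1 (by simp)) (hrQ' j)
      · exact h
    have hb := key _ _ (Q j).w (hQ.1 j) (by simp) rfl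
    have ha := key _ _ (Q j).w.reverse (mader_reverse (hQ.1 j)) (by simp) (wcost_reverse _ _)
    exact mader_ne (hQ.1 j) (ha.trans hb.symm)
  · push Not at hhit
    obtain ⟨j, hj⟩ := cover_u hno hQ
    have hoff : ∀ i, i ≠ j → IsMaderPath G T σ (Q i).w := fun i hij =>
      mader_off (hQ.1 i) fun h => hQ.2 i j hij u h hj
    apply hno
    rw [has_iff]
    rcases hpc with hpc | ⟨rfl, hpc⟩
    · exact ⟨_, pack_update j ⟨r, z, p⟩ hoff hQ.2 hpc (fun i _ y hy => hhit y hy i)⟩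
    · obtain ⟨v, q, hq, hqs, -⟩ := mader_orient (hQ.1 j) (Finset.mem_insert_self u T) hj
      have hvu : v ≠ u := (mader_ne hq).symm
      have hvT : v ∈ T := by simpa [hvu] using hq.2.2.1
      have hrv : r ≠ v := by
        rintro rfl
        exact hrQ' j ((hqs r).1 (by simp))
      refine ⟨_, pack_update j ⟨r, v, p.append (Walk.cons hadj q)⟩ hoff hQ.2 ?_ ?_⟩
      · refine ⟨?_, hrT, hvT, fun h => hrv (hinj r hrT v hvT h), ?_⟩
        · apply path_append _ _ hp
          · rw [Walk.cons_isPath_iff]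
            exact ⟨hq.1, fun h => hhit z (by simp) j ((hqs z).1 h)⟩
          · intro y hy hy'
            rcases (by simpa using hy' : y = z ∨ y ∈ q.support) with h | h
            · exact h
            · exact absurd ((hqs y).1 h) (hhit y hy j)
        · intro y hy hyT
          rw [Walk.mem_support_append_iff] at hy
          rcases hy with hy | hy
          · exact Or.inl (hpc y hy hyT)
          · rcases (by simpa using hy : y = z ∨ y ∈ q.support) with h | h
            · subst h; exact Or.inl (hpc y (by simp) hyT)
            · rcases hq.2.2.2.2 y h (by simp [hyT]) with h | h
              · exact absurd (h ▸ hyT) hu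
              · exact Or.inr h
      · intro i hij y hy hyi
        simp only [Walk.mem_support_append_iff] at hy
        rcases hy with hy | hy
        · exact hhit y hy i hyi
        · rcases (by simpa using hy : y = z ∨ y ∈ q.support) with h | h
          · subst h; exact hhit y (by simp) i hyi
          · exact hQ.2 i j hij y hyi ((hqs y).1 h)

theorem gallai_contra [Fintype V] [DecidableEq V] {t : V} {c K : ℕ} (ht : t ∈ T)
    (hc : ∀ v, σ v ≠ c)
    (hinj : ∀ a ∈ T, ∀ b ∈ T, σ a = σ b → a = b)
    (hno : ¬ HasMaderPacking G T σ K)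
    (hhas : ∀ u, u ∉ T → HasMaderPacking G (insert u T) (Function.update σ u c) K)
    {x : V} (p : G.Walk x t) (hp : p.IsPath) (hpT : ∀ y ∈ p.support, y ∈ T → y = x ∨ y = t)
    (hM : Miss G T σ K x t) : False := by
  induction p with
  | nil =>
    obtain ⟨P, i0, -, -, -, -, hP0x, -, hPt⟩ := hM
    subst hP0x
    exact hPt i0 (by simp)
  | cons hadj p ih =>
    rename_i x u t
    rw [Walk.cons_isPath_iff] at hp
    by_cases hut : u = t
    · subst hut
      obtain ⟨P, i0, hPm, hPd, hP0, hP0T, hP0x, hP0s, hPt⟩ := hM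
      apply hno
      rw [has_iff]
      subst hP0x
      refine ⟨_, pack_update i0 ⟨(P i0).a, u, (P i0).w.append (Walk.cons hadj Walk.nil)⟩
        hPm hPd ?_ ?_⟩
      · refine ⟨?_, hP0T, ht, ?_, ?_⟩
        · apply path_append _ _ hP0
          · simpa using hadj.ne
          · intro y hy hy'
            rcases (by simpa using hy' : y = (P i0).b ∨ y = u) with h | h
            · exact h
            · exact absurd (h ▸ hy) (hPt i0)
        · intro h
          have := hinj _ hP0T _ ht h
          apply hPt i0
          rw [← this]; simp
        · intro y hy hyT
          rw [Walk.mem_support_append_iff] at hy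
          rcases hy with hy | hy
          · exact Or.inl (hP0s y hy hyT)
          · rcases (by simpa using hy : y = (P i0).b ∨ y = u) with h | h
            · subst h; exact Or.inl (hP0s _ (by simp) hyT)
            · exact Or.inr h
      · intro i hij y hy hyi
        simp only [Walk.mem_support_append_iff] at hy
        rcases hy with hy | hy
        · exact hPd i i0 hij y hyi hy
        · rcases (by simpa using hy : y = (P i0).b ∨ y = u) with h | h
          · subst h; exact hPd i i0 hij _ hyi (by simp)
          · exact hPt i (h ▸ hyi)
    · have huT : u ∉ T := by
        intro h
        rcases hpT u (by simp) h with h | h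
        · exact hadj.ne h.symm
        · exact hut h
      refine ih ht hp.1 ?_ (gallai_step huT ht hc hinj hno (hhas u huT) hadj hM)
      intro y hy hyT
      rcases hpT y (by simp [hy]) hyT with h | h
      · subst h; exact absurd hy hp.2
      · exact Or.inr h

theorem schrijver_step [Fintype V] [DecidableEq V] {s : V} {c' K : ℕ} (hs : s ∈ T)
    (hst : ∀ a ∈ T, ∀ b ∈ T, σ a = σ b → ¬ G.Adj a b)
    (hhas' : HasMaderPacking G T (Function.update σ s c') K)
    (hhas : ∀ u, u ∉ T → HasMaderPacking G (insert u T) (Function.update σ u (σ s)) K) :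
    HasMaderPacking G T σ K := by
  by_contra hno
  obtain ⟨P, hP⟩ := has_iff.1 hhas'
  -- a path of `P` is either fine, or passes through `s` and joins two vertices of the class of `s`
  have hfine : ∀ i, s ∉ (P i).w.support → IsMaderPath G T σ (P i).w := by
    intro i hi
    obtain ⟨h1, h2, h3, h4, h5⟩ := hP.1 i
    have hau : (P i).a ≠ s := by rintro h; exact hi (by rw [← h]; simp)
    have hbu : (P i).b ≠ s := by rintro h; exact hi (by rw [← h]; simp)
    rw [Function.update_of_ne hau, Function.update_of_ne hbu] at h4
    exact ⟨h1, h2, h3, h4, h5⟩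
  obtain ⟨i0, hi0⟩ : ∃ i0, s ∈ (P i0).w.support := by
    by_contra h
    push Not at h
    exact hno (has_iff.2 ⟨P, fun i => hfine i (h i), hP.2⟩)
  obtain ⟨s', p0, hp0, hp0s, -⟩ := mader_orient (hP.1 i0) hs hi0
  have hss' : s ≠ s' := mader_ne hp0
  have hσs' : σ s' = σ s := by
    by_contra h
    apply hno
    rw [has_iff]
    refine ⟨_, pack_update i0 ⟨s, s', p0⟩
      (fun i hi => hfine i fun h => hP.2 i i0 hi s h hi0) hP.2
      ⟨hp0.1, hs, hp0.2.2.1, fun h' => h h'.symm, hp0.2.2.2.2⟩ ?_⟩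
    intro i hi y hy hyi
    exact hP.2 i i0 hi y hyi ((hp0s y).1 hy)
  -- interior vertex
  obtain ⟨u, huT, hup0⟩ : ∃ u, u ∉ T ∧ u ∈ p0.support := by
    cases p0 with
    | nil => exact absurd rfl hss'
    | cons hadj p1 =>
      rename_i u
      refine ⟨u, ?_, by simp⟩
      intro huT
      rcases hp0.2.2.2.2 u (by simp) huT with h | h
      · exact hadj.ne h.symm
      · subst h
        exact hst s hs u huT hσs'.symm hadj
  have hui0 : u ∈ (P i0).w.support := (hp0s u).1 hup0
  obtain ⟨Q, hQ, hmin⟩ := exists_min (edgs P) (hhas u huT)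
  have hcardQ := card_cov_insert huT hno hQ
  have hcardP := card_pack hP
  obtain ⟨r, hrP, hrQ⟩ : ∃ r ∈ cov T P, r ∉ cov T Q := by
    apply Finset.exists_mem_notMem_of_card_lt_card
    omega
  obtain ⟨hrT, i, hri⟩ := mem_cov.1 hrP
  have hrQ' : ∀ j, r ∉ (Q j).w.support := fun j hj => hrQ (mem_cov.2 ⟨hrT, j, hj⟩)
  obtain ⟨z, p, hp, hps, hpe⟩ := mader_orient (hP.1 i) hrT hri
  obtain ⟨j0, hj0⟩ := cover_u hno hQ
  by_cases hhit : ∃ y ∈ p.support, ∃ j, y ∈ (Q j).w.support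
  · obtain ⟨w, hw, j, hwj, hfirst⟩ := first_hit Q p hhit
    have hru : r ≠ u := by rintro rfl; exact huT hrT
    have key : ∀ (e' e : V) (q : G.Walk e' e),
        IsMaderPath G (insert u T) (Function.update σ u (σ s)) q →
        (∀ y, y ∈ q.support ↔ y ∈ (Q j).w.support) →
        wcost (edgs P) q = wcost (edgs P) (Q j).w →
        Function.update σ u (σ s) e' ≠ Function.update σ u (σ s) r →
        e = z ∧ σ z ≠ σ r := by
      intro e' e q hq hqs hqc hne
      have hwq : w ∈ q.support := (hqs w).2 hwj
      obtain ⟨h1, h2, h3⟩ := reroute huT hno hQ (edgs P) hmin p hp.1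
        (fun d hd => ⟨i, (hpe d).1 hd⟩) hp.2.2.2.2 hrT hrQ' hw hfirst q hq hqs hqc hwq hne
      have heT : e ∈ T := by simpa [h1] using hq.2.2.1
      have hfol := follow hP.2 i (q.dropUntil w hwq) ((hps w).1 hw) h2
      have hep : e ∈ p.support := (hps e).2 (hfol.1 e (by simp))
      have hez : e = z := by
        rcases hp.2.2.2.2 e hep heT with h | h
        · subst h
          exact absurd ((hqs e).1 (by simp)) (hrQ' j)
        · exact h
      refine ⟨hez, ?_⟩
      subst hez
      intro hσ
      -- then `P i` is the bad path
      have hi : i = i0 := by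
        by_contra hi
        have := hfine i (fun h => hP.2 i i0 hi s h hi0)
        have hm : IsMaderPath G T σ p := by
          have h4 := this.2.2.2.2
          have hra := h4 r hri hrT
          have hza := h4 e ((hps e).1 hep) heT
          have hre := mader_ne hp
          have h5 := this.2.2.2.1
          refine ⟨hp.1, hrT, heT, ?_, hp.2.2.2.2⟩
          rcases hra with h6 | h6 <;> rcases hza with h7 | h7
          · exact absurd (h6.trans h7.symm) hre
          · rw [h6, h7]; exact h5
          · rw [h6, h7]; exact h5.symm
          · exact absurd (h6.trans h7.symm) hre
        exact hm.2.2.2.1 hσ.symm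
      subst hi
      have hσr : σ r = σ s := by
        rcases hp.2.2.2.2 s ((hps s).2 hi0) hs with h | h
        · rw [h]
        · rw [h, hσ]
      have hup : u ∈ p.support := (hps u).2 hui0
      have huq : u ∈ q.support := by
        rw [← p.take_spec hw, Walk.mem_support_append_iff] at hup
        rcases hup with h | h
        · rw [hfirst u h j0 hj0]; exact hwq
        · apply q.support_dropUntil_subset_support hwq
          apply path_cover (p.dropUntil w hw) (q.dropUntil w hwq) (hp.1.dropUntil hw)
            (hq.1.dropUntil hwq) _ u h
          intro d hd
          have hdp : d ∈ p.edges := (hpe d).2 (hfol.2 d hd)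
          rw [← p.take_spec hw, Walk.edges_append, List.mem_append] at hdp
          rcases hdp with hdp | hdp
          · exfalso
            have hdq := q.edges_dropUntil_subset_edges hwq hd
            induction d using Sym2.ind with
            | _ y1 y2 =>
              have hy1 := hfirst y1 (Walk.fst_mem_support_of_mem_edges _ hdp) j
                ((hqs y1).1 (Walk.fst_mem_support_of_mem_edges _ hdq))
              have hy2 := hfirst y2 (Walk.snd_mem_support_of_mem_edges _ hdp) j
                ((hqs y2).1 (Walk.snd_mem_support_of_mem_edges _ hdq))
              have := q.adj_of_mem_edges hdq
              exact this.ne (hy1.trans hy2.symm)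
          · exact hdp
      rcases hq.2.2.2.2 u huq (by simp) with h | h
      · apply hne
        rw [← h, Function.update_self, Function.update_of_ne hru, hσr]
      · exact h1 h.symm
    have hb := key _ _ (Q j).w (hQ.1 j) (by simp) rfl
    have ha := key _ _ (Q j).w.reverse (mader_reverse (hQ.1 j)) (by simp) (wcost_reverse _ _)
    have hab := (hQ.1 j).2.2.2.1
    have hzu : z ≠ u := by
      rintro rfl
      exact huT hp.2.2.1
    by_cases h1 : Function.update σ u (σ s) (Q j).a = Function.update σ u (σ s) r
    · have h2 := ha (by rw [← h1]; exact hab.symm)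
      rw [h2.1, Function.update_of_ne hzu, Function.update_of_ne hru] at h1
      exact h2.2 h1
    · have h2 := hb h1
      by_cases h3 : Function.update σ u (σ s) (Q j).b = Function.update σ u (σ s) r
      · rw [h2.1, Function.update_of_ne hzu, Function.update_of_ne hru] at h3
        exact h2.2 h3
      · exact mader_ne (hQ.1 j) ((ha h3).1.trans h2.1.symm)
  · push Not at hhit
    have hi : i ≠ i0 := by
      rintro rfl
      exact hhit u ((hps u).2 hui0) j0 hj0
    apply hno
    rw [has_iff]
    refine ⟨_, pack_update j0 (P i) (fun i hij =>
      mader_off (hQ.1 i) fun h => hQ.2 i j0 hij u h hj0) hQ.2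
      (hfine i (fun h => hP.2 i i0 hi s h hi0)) ?_⟩
    intro i' _ y hy
    exact hhit y ((hps y).2 hy) i'

theorem noHit_insert [DecidableEq V] {k : ℕ} {u : V} {c : ℕ} (hu : u ∉ T)
    (h : NoHit G T σ k) : NoHit G (insert u T) (Function.update σ u c) k := by
  intro X hX
  obtain ⟨a, b, p, hp, hpX⟩ := h X hX
  by_cases hup : u ∈ p.support
  · have hmain : ∀ (a b : V) (p : G.Walk a b) (hup : u ∈ p.support), IsMaderPath G T σ p →
        σ a ≠ c →
        IsMaderPath G (insert u T) (Function.update σ u c) (p.takeUntil u hup) := by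
      intro a b p hup hp hac
      have hau : a ≠ u := by rintro rfl; exact hu hp.2.1
      have hbu : b ≠ u := by rintro rfl; exact hu hp.2.2.1
      refine ⟨hp.1.takeUntil hup, by simp [hp.2.1], by simp, ?_, ?_⟩
      · rwa [Function.update_self, Function.update_of_ne hau]
      · intro x hx hxT
        rcases Finset.mem_insert.1 hxT with h | h
        · exact Or.inr h
        · rcases hp.2.2.2.2 x (p.support_takeUntil_subset_support hup hx) h with h | h
          · exact Or.inl h
          · subst h
            exact absurd hx (Walk.endpoint_notMem_support_takeUntil hp.1 hup hbu)
    by_cases hac : σ a = c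
    · have hbc : σ b ≠ c := fun h => hp.2.2.2.1 (hac.trans h.symm)
      refine ⟨_, _, _, hmain _ _ p.reverse (by simpa using hup) (mader_reverse hp) hbc, ?_⟩
      intro x hx hx'
      have := Walk.support_takeUntil_subset_support _ _ hx'
      exact hpX x hx (by simpa using this)
    · exact ⟨_, _, _, hmain _ _ p hup hp hac, fun x hx hx' =>
        hpX x hx (Walk.support_takeUntil_subset_support _ _ hx')⟩
  · exact ⟨a, b, p, mader_on hp hup, hpX⟩

theorem noHit_split [DecidableEq V] {k : ℕ} {s : V} {c : ℕ} (hc : ∀ v, σ v ≠ c)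
    (h : NoHit G T σ k) : NoHit G T (Function.update σ s c) k := by
  intro X hX
  obtain ⟨a, b, p, hp, hpX⟩ := h X hX
  refine ⟨a, b, p, ⟨hp.1, hp.2.1, hp.2.2.1, ?_, hp.2.2.2.2⟩, hpX⟩
  have hab := mader_ne hp
  by_cases ha : a = s
  · subst ha
    rw [Function.update_self, Function.update_of_ne hab.symm]
    exact (hc b).symm
  · rw [Function.update_of_ne ha]
    by_cases hb : b = s
    · subst hb
      rw [Function.update_self]
      exact hc a
    · rw [Function.update_of_ne hb]
      exact hp.2.2.2.1

/-- Delete the vertices `D` (make them isolated). -/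
def del (G : SimpleGraph V) (D : Finset V) : SimpleGraph V where
  Adj x y := G.Adj x y ∧ x ∉ D ∧ y ∉ D
  symm := ⟨fun _ _ h => ⟨h.1.symm, h.2.2, h.2.1⟩⟩
  loopless := ⟨fun _ h => h.1.ne rfl⟩

theorem del_avoid {D : Finset V} {a b : V} (p : (del G D).Walk a b) (ha : a ∉ D) :
    ∀ x ∈ p.support, x ∉ D := by
  induction p with
  | nil => simpa using ha
  | cons hadj p ih =>
    intro x hx
    rcases (by simpa using hx : x = _ ∨ x ∈ p.support) with rfl | h
    · exact ha
    · exact ih hadj.2.2 x h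

theorem noHit_del [DecidableEq V] {k : ℕ} {D : Finset V} (hD : D.card ≤ 2)
    (h : NoHit G T σ (k + 1)) : NoHit (del G D) (T \ D) σ k := by
  intro X hX
  obtain ⟨a, b, p, hp, hpX⟩ := h (X ∪ D) ((Finset.card_union_le _ _).trans (by omega))
  have hpD : ∀ x ∈ p.support, x ∉ D := fun x hx hxD => hpX x (by simp [hxD]) hx
  have hH : ∀ e ∈ p.edges, e ∈ (del G D).edgeSet := by
    intro e he
    induction e using Sym2.ind with
    | _ x y =>
      exact ⟨p.adj_of_mem_edges he, hpD x (p.fst_mem_support_of_mem_edges he),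
        hpD y (p.snd_mem_support_of_mem_edges he)⟩
  have hm := mader_transfer hp hH
  refine ⟨a, b, p.transfer _ hH, ⟨hm.1, ?_, ?_, hm.2.2.2.1, ?_⟩, ?_⟩
  · exact Finset.mem_sdiff.2 ⟨hm.2.1, hpD a (by simp)⟩
  · exact Finset.mem_sdiff.2 ⟨hm.2.2.1, hpD b (by simp)⟩
  · intro x hx hxT
    exact hm.2.2.2.2 x hx (Finset.mem_sdiff.1 hxT).1
  · intro x hx hx'
    exact hpX x (by simp [hx]) (by simpa using hx')

theorem pack_del [DecidableEq V] {K : ℕ} {D : Finset V}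
    (h : HasMaderPacking (del G D) (T \ D) σ K) :
    ∃ Q : Fin K → PW G, Pack G T σ Q ∧ ∀ i, ∀ x ∈ D, x ∉ (Q i).w.support := by
  obtain ⟨Q, hQ⟩ := has_iff.1 h
  have hH : ∀ i, ∀ e ∈ (Q i).w.edges, e ∈ G.edgeSet := by
    intro i e he
    have := (Q i).w.edges_subset_edgeSet he
    induction e using Sym2.ind with
    | _ x y => exact this.1
  have hav : ∀ i, ∀ x ∈ (Q i).w.support, x ∉ D := fun i =>
    del_avoid (Q i).w (Finset.mem_sdiff.1 (hQ.1 i).2.1).2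
  refine ⟨fun i => ⟨_, _, (Q i).w.transfer G (hH i)⟩, ⟨?_, ?_⟩, ?_⟩
  · intro i
    have hm := mader_transfer (hQ.1 i) (hH i)
    refine ⟨hm.1, (Finset.mem_sdiff.1 hm.2.1).1, (Finset.mem_sdiff.1 hm.2.2.1).1, hm.2.2.2.1, ?_⟩
    intro x hx hxT
    exact hm.2.2.2.2 x hx (Finset.mem_sdiff.2 ⟨hxT, hav i x (by simpa using hx)⟩)
  · intro i j hij x hx hx'
    exact hQ.2 i j hij x (by simpa using hx) (by simpa using hx')
  · intro i x hx hx'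
    exact hav i x (by simpa using hx') hx

theorem noHit_le {H : SimpleGraph V} {k : ℕ}
    (hGH : ∀ x y, G.Adj x y → ¬ H.Adj x y → x ∈ T ∧ y ∈ T ∧ σ x = σ y)
    (h : NoHit G T σ k) : NoHit H T σ k := by
  intro X hX
  obtain ⟨a, b, p, hp, hpX⟩ := h X hX
  have hH : ∀ e ∈ p.edges, e ∈ H.edgeSet := by
    intro e he
    induction e using Sym2.ind with
    | _ x y =>
      by_contra hcon
      have hadj := p.adj_of_mem_edges he
      obtain ⟨h1, h2, h3⟩ := hGH x y hadj hcon
      have h4 := hp.2.2.2.2 x (p.fst_mem_support_of_mem_edges he) h1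
      have h5 := hp.2.2.2.2 y (p.snd_mem_support_of_mem_edges he) h2
      have h6 := hp.2.2.2.1
      have h7 := hadj.ne
      rcases h4 with rfl | rfl <;> rcases h5 with rfl | rfl
      · exact h7 rfl
      · exact h6 h3
      · exact h6 h3.symm
      · exact h7 rfl
  exact ⟨a, b, p.transfer _ hH, mader_transfer hp hH, fun x hx hx' =>
    hpX x hx (by simpa using hx')⟩

theorem pack_le {H : SimpleGraph V} {K : ℕ} (hle : H ≤ G) (h : HasMaderPacking H T σ K) :
    HasMaderPacking G T σ K := by
  obtain ⟨Q, hQ⟩ := has_iff.1 h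
  have hH : ∀ i, ∀ e ∈ (Q i).w.edges, e ∈ G.edgeSet := fun i e he =>
    edgeSet_mono hle ((Q i).w.edges_subset_edgeSet he)
  refine has_iff.2 ⟨fun i => ⟨_, _, (Q i).w.transfer G (hH i)⟩,
    fun i => mader_transfer (hQ.1 i) (hH i), ?_⟩
  intro i j hij x hx hx'
  exact hQ.2 i j hij x (by simpa using hx) (by simpa using hx')

section
variable [Fintype V] [DecidableEq V]

/-- Pairs not separated. -/
def nonsep (T : Finset V) (σ : V → ℕ) : Finset (V × V) :=
  Finset.univ.filter fun x => ¬ (x.1 ∈ T ∧ x.2 ∈ T ∧ σ x.1 ≠ σ x.2)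

noncomputable def meas (G : SimpleGraph V) (T : Finset V) (σ : V → ℕ) : ℕ :=
  G.edgeSet.ncard * (Fintype.card (V × V) + 1) + (nonsep T σ).card

theorem meas_lt_of_lt {H : SimpleGraph V} {T' : Finset V} {σ' : V → ℕ} (h : H < G) :
    meas H T' σ' < meas G T σ := by
  have h1 : H.edgeSet.ncard < G.edgeSet.ncard :=
    Set.ncard_lt_ncard (edgeSet_ssubset_edgeSet.2 h) (Set.toFinite _)
  have h2 : (nonsep T' σ').card ≤ Fintype.card (V × V) := Finset.card_le_univ _
  unfold meas
  nlinarith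

theorem meas_lt_of_sep {T' : Finset V} {σ' : V → ℕ} (h : nonsep T' σ' ⊂ nonsep T σ) :
    meas G T' σ' < meas G T σ := by
  have := Finset.card_lt_card h
  unfold meas
  omega

theorem main : ∀ (m : ℕ) (G : SimpleGraph V) (T : Finset V) (σ : V → ℕ) (k : ℕ),
    meas G T σ = m → NoHit G T σ k → HasMaderPacking G T σ (k + 1) := by
  intro m
  induction m using Nat.strong_induction_on with
  | _ m IH =>
  intro G T σ k hm hNH
  subst hm
  obtain ⟨s, t, p, hp, -⟩ := hNH ∅ (by simp)
  obtain ⟨c, hc'⟩ := Infinite.exists_notMem_finset (Finset.univ.image σ)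
  have hc : ∀ v, σ v ≠ c := fun v h => hc' (by rw [← h]; simp)
  -- adding a terminal
  have hadd : ∀ u, u ∉ T → ∀ d : ℕ,
      HasMaderPacking G (insert u T) (Function.update σ u d) (k + 1) := by
    intro u hu d
    refine IH _ (meas_lt_of_sep ?_) G _ _ k rfl (noHit_insert hu hNH)
    obtain ⟨x, hx, hxd⟩ : ∃ x ∈ T, σ x ≠ d := by
      by_cases h : σ s = d
      · exact ⟨t, hp.2.2.1, fun h' => hp.2.2.2.1 (h.trans h'.symm)⟩
      · exact ⟨s, hp.2.1, h⟩
    have hxu : x ≠ u := by rintro rfl; exact hu hx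
    rw [Finset.ssubset_iff_of_subset]
    · refine ⟨(u, x), ?_, ?_⟩
      · simp [nonsep, hu]
      · simp [nonsep, hx, Function.update_of_ne hxu, hxd.symm]
    · rintro ⟨y, y'⟩ hy
      simp only [nonsep, Finset.mem_filter, Finset.mem_univ, true_and] at hy ⊢
      rintro ⟨h1, h2, h3⟩
      apply hy
      have h4 : y ≠ u := by rintro rfl; exact hu h1
      have h5 : y' ≠ u := by rintro rfl; exact hu h2
      refine ⟨by simp [h1], by simp [h2], ?_⟩
      rwa [Function.update_of_ne h4, Function.update_of_ne h5]
  by_cases hst : ∀ a ∈ T, ∀ b ∈ T, σ a = σ b → ¬ G.Adj a b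
  swap
  · push Not at hst
    obtain ⟨a, ha, b, hb, hab, hadj⟩ := hst
    have hlt : G.deleteEdges {s(a, b)} < G := by
      refine lt_of_le_of_ne (deleteEdges_le _) ?_
      intro h
      rw [← h] at hadj
      simp [deleteEdges_adj] at hadj
    apply pack_le hlt.le
    refine IH _ (meas_lt_of_lt hlt) _ _ _ k rfl (noHit_le ?_ hNH)
    intro x y h1 h2
    have h3 : s(x, y) = s(a, b) := by
      by_contra h
      exact h2 (by simp only [deleteEdges_adj, Set.mem_singleton_iff]; exact ⟨h1, h⟩)
    rcases Sym2.eq_iff.1 h3 with ⟨rfl, rfl⟩ | ⟨rfl, rfl⟩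
    · exact ⟨ha, hb, hab⟩
    · exact ⟨hb, ha, hab.symm⟩
  by_cases hinj : ∀ a ∈ T, ∀ b ∈ T, σ a = σ b → a = b
  swap
  · push Not at hinj
    obtain ⟨a, ha, b, hb, hab, hne⟩ := hinj
    refine schrijver_step ha (c' := c) hst ?_ (fun u hu => hadd u hu _)
    refine IH _ (meas_lt_of_sep ?_) G _ _ k rfl (noHit_split hc hNH)
    rw [Finset.ssubset_iff_of_subset]
    · refine ⟨(a, b), ?_, ?_⟩
      · simp [nonsep, hab]
      · simp [nonsep, ha, hb, Function.update_of_ne hne.symm, (hc b).symm]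
    · rintro ⟨y, y'⟩ hy
      simp only [nonsep, Finset.mem_filter, Finset.mem_univ, true_and] at hy ⊢
      rintro ⟨h1, h2, h3⟩
      apply hy
      refine ⟨h1, h2, ?_⟩
      by_cases h4 : y = a
      · have h5 : y' ≠ a := by rintro rfl; exact h3 (by rw [h4])
        rw [h4, Function.update_self, Function.update_of_ne h5]
        exact (hc y').symm
      · rw [Function.update_of_ne h4]
        by_cases h5 : y' = a
        · rw [h5, Function.update_self]; exact hc y
        · rwa [Function.update_of_ne h5]
  -- all terminals in distinct blocks
  by_contra hno
  have hst' : s ≠ t := mader_ne hp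
  refine gallai_contra hp.2.2.1 hc hinj hno (fun u hu => hadd u hu c) p hp.1 hp.2.2.2.2 ?_
  -- a family missing both ends
  have hfam : ∃ Q : Fin k → PW G, Pack G T σ Q ∧ ∀ i, ∀ x ∈ ({s, t} : Finset V),
      x ∉ (Q i).w.support := by
    cases k with
    | zero => exact ⟨Fin.elim0, ⟨fun i => i.elim0, fun i => i.elim0⟩, fun i => i.elim0⟩
    | succ j =>
      apply pack_del
      have hD : ({s, t} : Finset V).card ≤ 2 := Finset.card_le_two
      refine IH _ (meas_lt_of_lt ?_) _ _ _ j rfl (noHit_del hD hNH)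
      refine lt_of_le_of_ne (fun x y h => h.1) ?_
      intro h
      cases p with
      | nil => exact hst' rfl
      | cons hadj p =>
        rw [← h] at hadj
        exact hadj.2.1 (by simp)
  obtain ⟨Q, hQ, hQD⟩ := hfam
  refine ⟨Fin.cons ⟨s, s, Walk.nil⟩ Q, 0, ?_, ?_, ?_, hp.2.1, rfl, ?_, ?_⟩
  · intro i hi
    obtain ⟨i', rfl⟩ := Fin.exists_succ_eq.2 hi
    exact hQ.1 i'
  · intro i j hij x hx hx'
    induction i using Fin.cases with
    | zero =>
      induction j using Fin.cases with
      | zero => exact hij rfl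
      | succ j =>
        have : x = s := List.mem_singleton.1 hx
        subst this
        exact hQD j x (by simp) hx'
    | succ i =>
      induction j using Fin.cases with
      | zero =>
        have : x = s := List.mem_singleton.1 hx'
        subst this
        exact hQD i x (by simp) hx
      | succ j => exact hQ.2 i j (fun h => hij (by rw [h])) x hx hx'
  · exact Walk.IsPath.nil
  · intro y hy _
    have : y = s := List.mem_singleton.1 hy
    exact this
  · intro i hi
    induction i using Fin.cases with
    | zero =>
      have : t = s := List.mem_singleton.1 hi
      exact hst' this.symm
    | succ i => exact hQD i t (by simp) hi

end

end MaderAux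

/-- A vertex multiway cut of size at most twice the packing number.
Let `ν = ν(G, 𝒯)` be the Mader path-packing number of `(G, 𝒯)`. Then there is a set
`X ⊆ V(G)` (possibly intersecting `T`) with `|X| ≤ 2ν` meeting every `𝒯`-path of `G`. -/
theorem stmt_17 {V : Type*} [Fintype V] [DecidableEq V]
    (G : SimpleGraph V) (T : Finset V) (σ : V → ℕ)
    (ν : ℕ) (hν : MaderNu G T σ ν) :
    ∃ X : Finset V, X.card ≤ 2 * ν ∧
      ∀ (u v : V) (p : G.Walk u v), IsMaderPath G T σ p → ∃ x ∈ X, x ∈ p.support := by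
  by_contra hcon
  push Not at hcon
  have := hν.2 _ (MaderAux.main _ G T σ ν rfl hcon)
  omega
end

section
/- For every pair of natural numbers k ≥ q ≥ 1 there exist a field F, a finite set V, a skew-symmetric matrix A over F indexed by V, a set T ⊆ V with |T| = k such that the principal submatrix A[T] is the zero matrix, and a family 𝒮 of q-element subsets of V ∖ T, such that every subfamily 𝒮' ⊆ 𝒮 with the following property has |𝒮'| ≥ binomial(k, q): for every X ⊆ T with |X| = q, if some Y ∈ 𝒮 repairs X with respect to A, then some Y' ∈ 𝒮' repairs X with respect to A. -/
/-- The principal submatrix `A[S]` of a matrix `A` indexed by `V`, for `S ⊆ V`. -/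
def principalSub {V F : Type*} (A : Matrix V V F) (S : Finset V) : Matrix ↥S ↥S F :=
  A.submatrix (fun x => (x : V)) (fun x => (x : V))

/-- `S` is feasible for `A`: the principal submatrix `A[S]` is nonsingular. -/
def Feasible {V F : Type*} [DecidableEq V] [Field F] (A : Matrix V V F)
    (S : Finset V) : Prop :=
  (principalSub A S).det ≠ 0

/-- `Y` repairs `X` with respect to `A`: `X` is infeasible, `X ∩ Y = ∅`, `X ∪ Y` is
feasible, and `X ∪ Y` is a minimal feasible superset of `X`. -/
def Repairs {V F : Type*} [DecidableEq V] [Field F] (A : Matrix V V F)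
    (X Y : Finset V) : Prop :=
  ¬ Feasible A X ∧ X ∩ Y = ∅ ∧ Feasible A (X ∪ Y) ∧
    ∀ F₀ : Finset V, X ⊆ F₀ → F₀ ⊂ X ∪ Y → ¬ Feasible A F₀

/-- Adjacency matrix of a perfect matching, over the field with two elements. -/
def matchMat (k : ℕ) : Matrix (Fin k ⊕ Fin k) (Fin k ⊕ Fin k) (ZMod 2) :=
  fun u v => if v = u.swap then 1 else 0

lemma swap_mem_of_feasible {k : ℕ} (S : Finset (Fin k ⊕ Fin k))
    (h : Feasible (matchMat k) S) (u : Fin k ⊕ Fin k) (hu : u ∈ S) : u.swap ∈ S := by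
  by_contra hn
  apply h
  apply Matrix.det_eq_zero_of_row_eq_zero ⟨u, hu⟩
  rintro ⟨v, hv⟩
  have : v ≠ u.swap := by
    rintro rfl
    exact hn hv
  simp [principalSub, matchMat, this]

lemma feasible_of_swap_mem {k : ℕ} (S : Finset (Fin k ⊕ Fin k))
    (h : ∀ u ∈ S, u.swap ∈ S) : Feasible (matchMat k) S := by
  intro hd
  haveI : Fact (Nat.Prime 2) := ⟨Nat.prime_two⟩
  obtain ⟨v, hv, hv0⟩ := Matrix.exists_mulVec_eq_zero_iff.mpr hd
  apply hv
  funext x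
  have h1 := congrFun hv0 ⟨x.1.swap, h _ x.2⟩
  rw [Matrix.mulVec, dotProduct, Finset.sum_eq_single x] at h1
  · simpa [principalSub, matchMat] using h1
  · intro b _ hb
    have : b.1 ≠ x.1 := fun e => hb (Subtype.ext e)
    simp [principalSub, matchMat, this]
  · simp

/-- Lower bound for delta-matroid representative sets.
For all `k ≥ q ≥ 1` there are a field `F`, a skew-symmetric matrix `A` indexed by a
finite set `V`, a terminal set `T ⊆ V` with `|T| = k` and `A[T] = 0`, and a family `𝒮`
of `q`-element subsets of `V ∖ T`, such that every `𝒮' ⊆ 𝒮` that, for each `X ⊆ T`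
with `|X| = q`, retains a repairing set whenever `𝒮` contains one, must satisfy
`|𝒮'| ≥ C(k, q)`. -/
theorem stmt_19 (k q : ℕ) (hq : 1 ≤ q) (hqk : q ≤ k) :
    ∃ (F : Type) (_ : Field F) (V : Type) (_ : Fintype V) (_ : DecidableEq V)
      (A : Matrix V V F),
      (∀ u v, A u v = - A v u) ∧ (∀ v, A v v = 0) ∧
      ∃ T : Finset V, T.card = k ∧
        (∀ u ∈ T, ∀ v ∈ T, A u v = 0) ∧
        ∃ 𝒮 : Finset (Finset V),
          (∀ Y ∈ 𝒮, Y.card = q ∧ ∀ y ∈ Y, y ∉ T) ∧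
          ∀ 𝒮' ⊆ 𝒮,
            (∀ X ⊆ T, X.card = q →
              (∃ Y ∈ 𝒮, Repairs A X Y) → ∃ Y' ∈ 𝒮', Repairs A X Y') →
            k.choose q ≤ 𝒮'.card := by
  have hsi : Function.Injective (Sum.swap : Fin k ⊕ Fin k → Fin k ⊕ Fin k) :=
    Sum.swap_leftInverse.injective
  have hT : ∀ u : Fin k ⊕ Fin k,
      u ∈ (Finset.univ : Finset (Fin k)).map Function.Embedding.inl ↔ u.isLeft := by
    rintro (u | u) <;> simp
  refine ⟨ZMod 2, inferInstance, Fin k ⊕ Fin k, inferInstance, inferInstance, matchMat k,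
    ?_, ?_, (Finset.univ : Finset (Fin k)).map Function.Embedding.inl, by simp, ?_,
    (Finset.powersetCard q ((Finset.univ : Finset (Fin k)).map Function.Embedding.inl)).image
      (fun X => X.image Sum.swap), ?_, ?_⟩
  · intro u v
    have : v = u.swap ↔ u = v.swap := by
      constructor <;> rintro rfl <;> simp
    simp only [matchMat, this, CharTwo.neg_eq]
  · rintro (v | v) <;> simp [matchMat]
  · intro u hu v hv
    rw [hT] at hu hv
    rcases u with u | u <;> rcases v with v | v <;> simp_all [matchMat]
  · intro Y hY
    obtain ⟨X, hX, rfl⟩ := Finset.mem_image.mp hY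
    rw [Finset.mem_powersetCard] at hX
    refine ⟨by rw [Finset.card_image_of_injective _ hsi, hX.2], ?_⟩
    intro y hy
    obtain ⟨x, hx, rfl⟩ := Finset.mem_image.mp hy
    have := (hT x).1 (hX.1 hx)
    rw [hT]
    rcases x with x | x <;> simp_all
  · intro S' hS' hrep
    have key : (Finset.powersetCard q
        ((Finset.univ : Finset (Fin k)).map Function.Embedding.inl)).image
        (fun X => X.image Sum.swap) ⊆ S' := by
      intro Y hY
      obtain ⟨X, hX, rfl⟩ := Finset.mem_image.mp hY
      have hX' := Finset.mem_powersetCard.mp hX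
      have hns : ∀ x ∈ X, x.swap ∉ X := by
        intro x hx hx2
        have h1 := (hT x).1 (hX'.1 hx)
        have h2 := (hT _).1 (hX'.1 hx2)
        rcases x with x | x <;> simp_all
      have hsub : ∀ S, X ⊆ S → Feasible (matchMat k) S → X.image Sum.swap ⊆ S := by
        intro S hXS hS y hy
        obtain ⟨x, hx, rfl⟩ := Finset.mem_image.mp hy
        exact swap_mem_of_feasible S hS x (hXS hx)
      obtain ⟨Y', hY', hr⟩ := hrep X hX'.1 hX'.2 ⟨_, hY, by
        refine ⟨?_, ?_, ?_, ?_⟩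
        · intro hf
          obtain ⟨x, hx⟩ := Finset.card_pos.mp (by omega : 0 < X.card)
          exact hns x hx (swap_mem_of_feasible X hf x hx)
        · rw [← Finset.disjoint_iff_inter_eq_empty, Finset.disjoint_right]
          intro y hy
          obtain ⟨x, hx, rfl⟩ := Finset.mem_image.mp hy
          exact hns x hx
        · apply feasible_of_swap_mem
          intro u hu
          rcases Finset.mem_union.mp hu with hu | hu
          · exact Finset.mem_union_right _ (Finset.mem_image_of_mem _ hu)
          · obtain ⟨x, hx, rfl⟩ := Finset.mem_image.mp hu
            simp [hx]
        · intro S hXS hS hf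
          exact hS.2 (Finset.union_subset hXS (hsub S hXS hf))⟩
      have hcard : Y'.card = q := by
        obtain ⟨Z, hZ, rfl⟩ := Finset.mem_image.mp (hS' hY')
        rw [Finset.card_image_of_injective _ hsi, (Finset.mem_powersetCard.mp hZ).2]
      have hle : X.image Sum.swap ⊆ Y' := by
        intro y hy
        have h1 := hsub _ Finset.subset_union_left hr.2.2.1 hy
        obtain ⟨x, hx, rfl⟩ := Finset.mem_image.mp hy
        exact (Finset.mem_union.mp h1).resolve_left (hns x hx)
      have : X.image Sum.swap = Y' := Finset.eq_of_subset_of_card_le hle (by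
        rw [Finset.card_image_of_injective _ hsi, hX'.2, hcard])
      simpa [this] using hY'
    have h := Finset.card_le_card key
    rw [Finset.card_image_of_injective _ (Finset.image_injective hsi),
      Finset.card_powersetCard] at h
    simpa using h
end
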